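/- arXiv:2410.08316 — 3 statements merged into one kernel-verified Lean document; each statement's English description precedes it below -/
import Mathlib

section
/- (Proposition 1, linear transformation property.) Fix m ≥ 1, a finite dataset index type K, item counts n : K → ℕ with n k ≥ 1, base scores s₀ : ∀ k, Fin (n k) → ℝ, labels z : Fin m → ∀ k, Fin (n k) → ℝ, temperatures β : Fin m → ℝ with β j > 0, and a probability measure μ on the weight space W := (Fin m → ℝ). For a conditioned model S : W → ∀ k, Fin (n k) → ℝ define the Weight-COS-DPO loss F_β(S) := ∫_W ( ∑_{k ∈ K} ∑_{j} (w j) · ℓ(S w k, s₀ k, β j, z j k) ) dμ(w). Let c > 0 and suppose S⋆ minimizes F_β, i.e., F_β(S⋆) ≤ F_β(S) for every S : W → ∀ k, Fin (n k) → ℝ. Then the transformed model S' defined by S' w k i := (1 − 1/c)·s₀ k i + (1/c)·S⋆ w k i minimizes the loss with temperature c·β: F_{c·β}(S') ≤ F_{c·β}(S) for every S : W → ∀ k, Fin (n k) → ℝ. -/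
open scoped BigOperators
open MeasureTheory

/-- Per-list LiPO loss. -/
noncomputable def lipoLoss {n : ℕ} (s s₀ : Fin n → ℝ) (β : ℝ) (z : Fin n → ℝ) : ℝ :=
  - ∑ i, z i * Real.log (Real.exp (β * (s i - s₀ i)) / ∑ i', Real.exp (β * (s i' - s₀ i')))

/-- The loss depends on the scores only through `β * (s i - s₀ i)`. -/
theorem lipoLoss_congr_aux {n : ℕ} (s t s₀ : Fin n → ℝ) (b b' : ℝ) (z : Fin n → ℝ)
    (h : ∀ i, b * (s i - s₀ i) = b' * (t i - s₀ i)) :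
    lipoLoss s s₀ b z = lipoLoss t s₀ b' z := by
  unfold lipoLoss
  simp only [h]

/-- Proposition 1 (linear transformation property): if `S⋆` minimizes the
Weight-COS-DPO loss with temperature vector `β`, then the affinely transformed
model minimizes the loss with temperature `c·β`. -/
theorem weight_cos_dpo_linear_transform
    {m : ℕ} (hm : 1 ≤ m) {K : Type*} [Fintype K]
    (n : K → ℕ) (hn : ∀ k, 1 ≤ n k)
    (s₀ : ∀ k, Fin (n k) → ℝ)
    (z : Fin m → ∀ k, Fin (n k) → ℝ)
    (β : Fin m → ℝ) (hβ : ∀ j, 0 < β j)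
    (μ : Measure (Fin m → ℝ)) [IsProbabilityMeasure μ]
    (c : ℝ) (hc : 0 < c)
    (Sstar : (Fin m → ℝ) → ∀ k, Fin (n k) → ℝ)
    (hmin : ∀ S : (Fin m → ℝ) → ∀ k, Fin (n k) → ℝ,
      (∫ w, (∑ k, ∑ j, w j * lipoLoss (Sstar w k) (s₀ k) (β j) (z j k)) ∂μ)
        ≤ ∫ w, (∑ k, ∑ j, w j * lipoLoss (S w k) (s₀ k) (β j) (z j k)) ∂μ)
    (S' : (Fin m → ℝ) → ∀ k, Fin (n k) → ℝ)
    (hS' : ∀ w k i, S' w k i = (1 - 1 / c) * s₀ k i + (1 / c) * Sstar w k i) :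
    ∀ S : (Fin m → ℝ) → ∀ k, Fin (n k) → ℝ,
      (∫ w, (∑ k, ∑ j, w j * lipoLoss (S' w k) (s₀ k) (c * β j) (z j k)) ∂μ)
        ≤ ∫ w, (∑ k, ∑ j, w j * lipoLoss (S w k) (s₀ k) (c * β j) (z j k)) ∂μ := by
  intro S
  have h1 : ∀ w k j, lipoLoss (S' w k) (s₀ k) (c * β j) (z j k)
      = lipoLoss (Sstar w k) (s₀ k) (β j) (z j k) := by
    intro w k j
    apply lipoLoss_congr_aux
    intro i
    rw [hS']
    field_simp
    ring
  have h2 : ∀ w k j, lipoLoss (S w k) (s₀ k) (c * β j) (z j k)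
      = lipoLoss (fun i => s₀ k i + c * (S w k i - s₀ k i)) (s₀ k) (β j) (z j k) := by
    intro w k j
    apply lipoLoss_congr_aux
    intro i
    ring
  simp only [h1, h2]
  exact hmin (fun w k i => s₀ k i + c * (S w k i - s₀ k i))
end

section
/- (Pairwise ListNet loss equals DPO loss.) Let s, s₀ : Fin 2 → ℝ, let β ∈ ℝ, and let z : Fin 2 → ℝ be the L1-normalized binary preference label with z 0 = 1 and z 1 = 0 (item 0 preferred over item 1). Then the per-list LiPO loss equals the DPO negative log-likelihood: ℓ(s, s₀, β, z) = − log ( σ ( β·( (s 0 − s₀ 0) − (s 1 − s₀ 1) ) ) ), where σ(x) := 1 / (1 + exp(−x)) is the logistic sigmoid. -/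
open scoped BigOperators

/-- With binary L1-normalized labels on a two-item list, the LiPO loss coincides
with the DPO negative log-likelihood `− log σ(β((s 0 − s₀ 0) − (s 1 − s₀ 1)))`,
where `σ(x) = 1/(1 + exp(−x))`. -/
theorem lipo_eq_dpo (s s₀ : Fin 2 → ℝ) (β : ℝ)
    (z : Fin 2 → ℝ) (hz0 : z 0 = 1) (hz1 : z 1 = 0) :
    lipoLoss s s₀ β z
      = - Real.log (1 / (1 + Real.exp (-(β * ((s 0 - s₀ 0) - (s 1 - s₀ 1)))))) := by
  unfold lipoLoss
  simp only [Fin.sum_univ_two, hz0, hz1, one_mul, zero_mul, add_zero]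
  have h : Real.exp (β * (s 1 - s₀ 1)) = Real.exp (β * (s 0 - s₀ 0)) *
      Real.exp (-(β * ((s 0 - s₀ 0) - (s 1 - s₀ 1)))) := by
    rw [← Real.exp_add]
    congr 1
    ring
  rw [h]
  congr 2
  have h0 := Real.exp_pos (β * (s 0 - s₀ 0))
  have h1 := Real.exp_pos (-(β * ((s 0 - s₀ 0) - (s 1 - s₀ 1))))
  rw [div_eq_div_iff (by positivity) (by positivity)]
  ring
end

section
/- (Proposition 2, linear transformation property with penalization.) Fix m ≥ 1, a finite dataset index type K, item counts n : K → ℕ with n k ≥ 1, base scores s₀ : ∀ k, Fin (n k) → ℝ, labels z : Fin m → ∀ k, Fin (n k) → ℝ, temperatures β : Fin m → ℝ with β j > 0, a penalization coefficient λ ∈ ℝ, an arbitrary penalty function G : (Fin m → ℝ) → (Fin m → ℝ) → ℝ (taking the weight vector and the loss vector), and a probability measure μ on the weight space W := (Fin m → ℝ). For S : W → ∀ k, Fin (n k) → ℝ, let L̄_β(S, w) : Fin m → ℝ be the aggregated loss vector L̄_β(S, w) j := ∑_{k ∈ K} ℓ(S w k, s₀ k, β j, z j k), and define the penalized Weight-COS-DPO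 loss F_β(S) := ∫_W ( ∑_j (w j) · L̄_β(S, w) j + λ · G w (L̄_β(S, w)) ) dμ(w). Let c > 0 and suppose S⋆ minimizes F_β over all S : W → ∀ k, Fin (n k) → ℝ. Then S' defined by S' w k i := (1 − 1/c)·s₀ k i + (1/c)·S⋆ w k i minimizes F_{c·β} over all S : W → ∀ k, Fin (n k) → ℝ. -/
open scoped BigOperators
open MeasureTheory

/-- Proposition 2 (linear transformation property with penalization): if `S⋆`
minimizes the penalized Weight-COS-DPO loss with temperature vector `β`, where
the penalty is an arbitrary function `G` of the weight vector and the aggregated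
loss vector, then the affinely transformed model minimizes the penalized loss
with temperature `c·β`. -/
theorem penalized_weight_cos_dpo_linear_transform
    {m : ℕ} (hm : 1 ≤ m) {K : Type*} [Fintype K]
    (n : K → ℕ) (hn : ∀ k, 1 ≤ n k)
    (s₀ : ∀ k, Fin (n k) → ℝ)
    (z : Fin m → ∀ k, Fin (n k) → ℝ)
    (β : Fin m → ℝ) (hβ : ∀ j, 0 < β j)
    (lam : ℝ) (G : (Fin m → ℝ) → (Fin m → ℝ) → ℝ)
    (μ : Measure (Fin m → ℝ)) [IsProbabilityMeasure μ]
    (c : ℝ) (hc : 0 < c)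
    (Sstar : (Fin m → ℝ) → ∀ k, Fin (n k) → ℝ)
    (hmin : ∀ S : (Fin m → ℝ) → ∀ k, Fin (n k) → ℝ,
      (∫ w, ((∑ j, w j * ∑ k, lipoLoss (Sstar w k) (s₀ k) (β j) (z j k))
          + lam * G w (fun j => ∑ k, lipoLoss (Sstar w k) (s₀ k) (β j) (z j k))) ∂μ)
        ≤ ∫ w, ((∑ j, w j * ∑ k, lipoLoss (S w k) (s₀ k) (β j) (z j k))
          + lam * G w (fun j => ∑ k, lipoLoss (S w k) (s₀ k) (β j) (z j k))) ∂μ)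
    (S' : (Fin m → ℝ) → ∀ k, Fin (n k) → ℝ)
    (hS' : ∀ w k i, S' w k i = (1 - 1 / c) * s₀ k i + (1 / c) * Sstar w k i) :
    ∀ S : (Fin m → ℝ) → ∀ k, Fin (n k) → ℝ,
      (∫ w, ((∑ j, w j * ∑ k, lipoLoss (S' w k) (s₀ k) (c * β j) (z j k))
          + lam * G w (fun j => ∑ k, lipoLoss (S' w k) (s₀ k) (c * β j) (z j k))) ∂μ)
        ≤ ∫ w, ((∑ j, w j * ∑ k, lipoLoss (S w k) (s₀ k) (c * β j) (z j k))
          + lam * G w (fun j => ∑ k, lipoLoss (S w k) (s₀ k) (c * β j) (z j k))) ∂μ := by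
  intro S
  have key : ∀ (N : ℕ) (s t a : Fin N → ℝ) (b : ℝ) (y : Fin N → ℝ),
      (∀ i, c * (s i - a i) = t i - a i) →
      lipoLoss s a (c * b) y = lipoLoss t a b y := by
    intro N s t a b y h
    have h2 : ∀ i, c * b * (s i - a i) = b * (t i - a i) := by
      intro i
      rw [← h i]
      ring
    simp only [lipoLoss, h2]
  have h1 : ∀ w k j, lipoLoss (S' w k) (s₀ k) (c * β j) (z j k)
      = lipoLoss (Sstar w k) (s₀ k) (β j) (z j k) := by
    intro w k j
    apply key
    intro i
    rw [hS']
    field_simp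
    ring
  have h2 : ∀ w k j, lipoLoss (S w k) (s₀ k) (c * β j) (z j k)
      = lipoLoss (fun i => s₀ k i + c * (S w k i - s₀ k i)) (s₀ k) (β j) (z j k) := by
    intro w k j
    apply key
    intro i
    ring
  simp only [h1, h2]
  exact hmin (fun w k i => s₀ k i + c * (S w k i - s₀ k i))
end
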